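/- arXiv:1605.03042 — 4 statements merged into one kernel-verified Lean document; each statement's English description precedes it below -/
import Mathlib

section
/- Let p ∈ (0,1], let J₁, J₂ be countable index sets, let ω : J₂ × J₁ → (0,∞), let B be a complex linear subspace of the space of all matrices a : J₂ × J₁ → ℂ, let N be a p-quasinorm on B, and let C > 0. Assume: (i) B is complete with respect to the metric d(a,b) = N(a−b)^p; (ii) for every (j₂,j₁) there is C′(j₂,j₁) > 0 with |a(j₂,j₁)| ≤ C′(j₂,j₁)·N(a) for all a ∈ B; (iii) every elementary matrix A_{k₂,k₁} (entry 1 at (k₂,k₁), 0 elsewhere) belongs to B with N(A_{k₂,k₁}) ≤ C·ω(k₂,k₁). Then every matrix a : J₂ × J₁ → ℂ with ∑_{(j₂,j₁)} (|a(j₂,j₁)|·ω(j₂,j₁))^p < ∞ belongs to B and satisfies N(a) ≤ C·(∑_{(j₂,j₁)} (|a(j₂,j₁)|·ω(j₂,j₁))^p)^{1/p}. -/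
open scoped Classical ENNReal

/-- Minimality of the weighted matrix class `U^p(ω)`: a complete
time-frequency-style quasi-Banach space `B` of matrices (with coordinate functionals
dominated by `N` and elementary matrices in `B` with `N ≤ C·ω`) contains every matrix
whose weighted `ℓ^p` sum is finite, with the corresponding quasinorm bound. -/
theorem matrix_minimality_Up
    {J₁ J₂ : Type*} [Countable J₁] [Countable J₂] {p : ℝ} (hp : 0 < p) (hp1 : p ≤ 1)
    (ω : J₂ × J₁ → ℝ) (hω : ∀ jk, 0 < ω jk)
    (B : Submodule ℂ ((J₂ × J₁) → ℂ)) (N : ((J₂ × J₁) → ℂ) → ℝ)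
    (hN0 : ∀ f ∈ B, 0 ≤ N f)
    (hNsmul : ∀ (α : ℂ), ∀ f ∈ B, N (α • f) = ‖α‖ * N f)
    (hNadd : ∀ f ∈ B, ∀ g ∈ B, N (f + g) ^ p ≤ N f ^ p + N g ^ p)
    (hcomplete : ∀ u : ℕ → ((J₂ × J₁) → ℂ), (∀ n, u n ∈ B) →
      (∀ ε : ℝ, 0 < ε → ∃ n₀ : ℕ, ∀ m n : ℕ, n₀ ≤ m → n₀ ≤ n → N (u m - u n) ^ p < ε) →
      ∃ b ∈ B, Filter.Tendsto (fun n => N (u n - b) ^ p) Filter.atTop (nhds 0))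
    (hcoord : ∀ k : J₂ × J₁, ∃ C' : ℝ, 0 < C' ∧ ∀ a ∈ B, ‖a k‖ ≤ C' * N a)
    (C : ℝ) (hC : 0 < C)
    (helem : ∀ k : J₂ × J₁,
      (fun jk => if jk = k then (1 : ℂ) else 0) ∈ B ∧
        N (fun jk => if jk = k then (1 : ℂ) else 0) ≤ C * ω k)
    (a : (J₂ × J₁) → ℂ)
    (ha : (∑' jk : J₂ × J₁, ENNReal.ofReal ((‖a jk‖ * ω jk) ^ p)) ≠ ⊤) :
    a ∈ B ∧
      N a ≤ C * ((∑' jk : J₂ × J₁, ENNReal.ofReal ((‖a jk‖ * ω jk) ^ p)).toReal) ^ (1 / p) := by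
  have hw0 : ∀ k, 0 ≤ (‖a k‖ * ω k) ^ p := fun k =>
    Real.rpow_nonneg (mul_nonneg (norm_nonneg _) (hω k).le) _
  have hsum : Summable (fun k => (‖a k‖ * ω k) ^ p) := by
    have h := ENNReal.summable_toReal ha
    refine h.congr (fun k => ?_)
    exact ENNReal.toReal_ofReal (hw0 k)
  have htsum : (∑' jk : J₂ × J₁, ENNReal.ofReal ((‖a jk‖ * ω jk) ^ p)).toReal
      = ∑' jk, (‖a jk‖ * ω jk) ^ p := by
    rw [← ENNReal.ofReal_tsum_of_nonneg hw0 hsum, ENNReal.toReal_ofReal (tsum_nonneg hw0)]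
  rw [htsum]
  set w : J₂ × J₁ → ℝ := fun k => (‖a k‖ * ω k) ^ p with hw
  have hCp : 0 < C ^ p := Real.rpow_pos_of_pos hC p
  have hNneg : ∀ f ∈ B, N (-f) = N f := by
    intro f hf
    have := hNsmul (-1) f hf
    simpa using this
  have hN00 : N 0 = 0 := by
    have := hNsmul 0 0 B.zero_mem
    simpa using this
  -- finite partial sums
  let E : J₂ × J₁ → (J₂ × J₁ → ℂ) := fun k jk => if jk = k then (1 : ℂ) else 0
  let P : Finset (J₂ × J₁) → (J₂ × J₁ → ℂ) := fun S => ∑ k ∈ S, a k • E k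
  have hPapp : ∀ S j, P S j = if j ∈ S then a j else 0 := by
    intro S j
    simp [P, E, Finset.sum_apply]
  have hPB : ∀ S, P S ∈ B := fun S =>
    B.sum_mem (fun k _ => B.smul_mem _ (helem k).1)
  have hPN : ∀ S, N (P S) ^ p ≤ C ^ p * ∑ k ∈ S, w k := by
    intro S
    induction S using Finset.induction_on with
    | empty => simp [P, hN00, Real.zero_rpow hp.ne']
    | insert k S hk ih =>
      have h1 : P (insert k S) = a k • E k + P S := Finset.sum_insert hk
      have h2 := hNadd _ (B.smul_mem (a k) (helem k).1) _ (hPB S)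
      have h3 : N (a k • E k) ^ p ≤ C ^ p * w k := by
        have h4 : N (a k • E k) = ‖a k‖ * N (E k) := hNsmul _ _ (helem k).1
        have h5 : N (E k) ≤ C * ω k := (helem k).2
        have h6 : 0 ≤ N (E k) := hN0 _ (helem k).1
        rw [h4, hw, ← Real.mul_rpow hC.le (mul_nonneg (norm_nonneg _) (hω k).le)]
        refine Real.rpow_le_rpow (mul_nonneg (norm_nonneg _) h6) ?_ hp.le
        calc ‖a k‖ * N (E k) ≤ ‖a k‖ * (C * ω k) :=
              mul_le_mul_of_nonneg_left h5 (norm_nonneg _)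
          _ = _ := by ring
      rw [h1, Finset.sum_insert hk, mul_add]
      exact h2.trans (add_le_add h3 ih)
  obtain ⟨s, hs⟩ := Filter.exists_seq_tendsto (Filter.atTop : Filter (Finset (J₂ × J₁)))
  have hdiff : ∀ S T, N (P S - P T) ^ p ≤
      C ^ p * ∑ k ∈ S \ T, w k + C ^ p * ∑ k ∈ T \ S, w k := by
    intro S T
    have h1 : P S - P T = P (S \ T) + -P (T \ S) := by
      funext j
      simp only [Pi.sub_apply, Pi.add_apply, Pi.neg_apply, hPapp, Finset.mem_sdiff]
      by_cases h1 : j ∈ S <;> by_cases h2 : j ∈ T <;> simp [h1, h2]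
    rw [h1]
    refine (hNadd _ (hPB _) _ (B.neg_mem (hPB _))).trans ?_
    rw [hNneg _ (hPB _)]
    exact add_le_add (hPN _) (hPN _)
  obtain ⟨b, hbB, hb⟩ := hcomplete (fun n => P (s n)) (fun n => hPB _) (by
    intro ε hε
    obtain ⟨T, hT⟩ := summable_iff_vanishing_norm.1 hsum (ε / (2 * C ^ p)) (by positivity)
    obtain ⟨n₀, hn₀⟩ := Filter.eventually_atTop.1 (hs.eventually (Filter.eventually_ge_atTop T))
    refine ⟨n₀, fun m n hm hn => ?_⟩
    have hX : ∀ i j, n₀ ≤ j → C ^ p * ∑ k ∈ s i \ s j, w k < ε / 2 := by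
      intro i j hj
      have h1 : Disjoint (s i \ s j) T :=
        Finset.disjoint_of_subset_right (hn₀ j hj) Finset.sdiff_disjoint
      have h2 := (le_abs_self _).trans_lt (hT _ h1)
      calc C ^ p * ∑ k ∈ s i \ s j, w k < C ^ p * (ε / (2 * C ^ p)) :=
            mul_lt_mul_of_pos_left h2 hCp
        _ = ε / 2 := by field_simp
    have := hdiff (s m) (s n)
    have h1 := hX m n hn
    have h2 := hX n m hm
    linarith)
  have hba : b = a := by
    funext k
    obtain ⟨C', hC', hk⟩ := hcoord k
    have hev : ∀ᶠ n in Filter.atTop, ‖a k - b k‖ ^ p ≤ C' ^ p * N (P (s n) - b) ^ p := by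
      filter_upwards [hs.eventually (Filter.eventually_ge_atTop {k})] with n hn
      have hmem : k ∈ s n := hn (Finset.mem_singleton_self k)
      have hB := B.sub_mem (hPB (s n)) hbB
      have h1 := hk _ hB
      rw [Pi.sub_apply, hPapp, if_pos hmem] at h1
      rw [← Real.mul_rpow hC'.le (hN0 _ hB)]
      exact Real.rpow_le_rpow (norm_nonneg _) h1 hp.le
    have h0 : ‖a k - b k‖ ^ p ≤ C' ^ p * 0 :=
      ge_of_tendsto (hb.const_mul (C' ^ p)) hev
    rw [mul_zero] at h0
    have h1 := le_antisymm h0 (Real.rpow_nonneg (norm_nonneg _) p)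
    have h2 := (Real.rpow_eq_zero (norm_nonneg _) hp.ne').1 h1
    exact (sub_eq_zero.1 (norm_eq_zero.1 h2)).symm
  subst hba
  refine ⟨hbB, ?_⟩
  have hfin : N b ^ p ≤ 0 + C ^ p * ∑' k, w k := by
    refine ge_of_tendsto (hb.add_const (C ^ p * ∑' k, w k)) (Filter.Eventually.of_forall ?_)
    intro n
    have hB := B.sub_mem (hPB (s n)) hbB
    have h1 := hNadd _ (B.neg_mem hB) _ (hPB (s n))
    rw [hNneg _ hB, neg_sub, sub_add_cancel] at h1
    have h2 : ∑ k ∈ s n, w k ≤ ∑' k, w k := hsum.sum_le_tsum _ (fun k _ => hw0 k)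
    have h3 := mul_le_mul_of_nonneg_left h2 hCp.le
    have h4 := hPN (s n)
    linarith
  rw [zero_add] at hfin
  have h5 := Real.rpow_le_rpow (Real.rpow_nonneg (hN0 _ hbB) p) hfin (by positivity : 0 ≤ 1 / p)
  rw [Real.mul_rpow hCp.le (tsum_nonneg hw0), ← Real.rpow_mul (hN0 _ hbB),
    ← Real.rpow_mul hC.le, mul_one_div_cancel hp.ne', Real.rpow_one, Real.rpow_one] at h5
  exact h5
end

section
/- Let p ∈ (0,1], q ∈ (0,∞), let B₁ be a complex vector space equipped with a nonnegative function N₁, and let B₂ be a complex vector space equipped with a p-quasinorm N₂. Let T₁, T₂ : B₁ → B₂ be linear maps with ‖T₁‖ < ∞ and ‖T₂‖ < ∞. Then (∑_{j≥1} σ_j(T₁+T₂)^q)^{1/q} ≤ 2^{(1/p−1) + max(1/q−1, 0) + 1/q}·((∑_{j≥1} σ_j(T₁)^q)^{1/q} + (∑_{j≥1} σ_j(T₂)^q)^{1/q}), where both sides may be +∞ and the sums are unordered sums in [0,∞]. -/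
open scoped ENNReal

noncomputable section

/-- The operator quasinorm `‖T‖ = sup { N₂(T f) : N₁ f ≤ 1 }`, valued in `[0,∞]`. -/
def opQNorm {B₁ B₂ : Type*} [AddCommGroup B₁] [Module ℂ B₁] [AddCommGroup B₂] [Module ℂ B₂]
    (N₁ : B₁ → ℝ) (N₂ : B₂ → ℝ) (T : B₁ →ₗ[ℂ] B₂) : ℝ≥0∞ :=
  ⨆ f : {f : B₁ // N₁ f ≤ 1}, ENNReal.ofReal (N₂ (T f.1))

/-- The `j`-th singular number `σ_j(T) = inf {‖T - T₀‖ : rank T₀ ≤ j - 1}`. -/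
def singNum {B₁ B₂ : Type*} [AddCommGroup B₁] [Module ℂ B₁] [AddCommGroup B₂] [Module ℂ B₂]
    (N₁ : B₁ → ℝ) (N₂ : B₂ → ℝ) (j : ℕ) (T : B₁ →ₗ[ℂ] B₂) : ℝ≥0∞ :=
  ⨅ T₀ : {T₀ : B₁ →ₗ[ℂ] B₂ // LinearMap.rank T₀ ≤ ((j - 1 : ℕ) : Cardinal)},
    opQNorm N₁ N₂ (T - T₀.1)

/-- The Schatten–von Neumann quasinorm of order `q`, `(∑_{j ≥ 1} σ_j(T)^q)^(1/q)`. -/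
def schattenQNorm {B₁ B₂ : Type*} [AddCommGroup B₁] [Module ℂ B₁] [AddCommGroup B₂]
    [Module ℂ B₂] (N₁ : B₁ → ℝ) (N₂ : B₂ → ℝ) (q : ℝ) (T : B₁ →ₗ[ℂ] B₂) : ℝ≥0∞ :=
  (∑' j : ℕ, singNum N₁ N₂ (j + 1) T ^ q) ^ (1 / q)

theorem ofReal_quasi_add {p : ℝ} (hp : 0 < p) (hp1 : p ≤ 1) {a b c : ℝ} (ha : 0 ≤ a) (hb : 0 ≤ b)
    (hc : 0 ≤ c) (h : a ^ p ≤ b ^ p + c ^ p) :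
    ENNReal.ofReal a ≤
      (2 : ℝ≥0∞) ^ (1 / p - 1) * (ENNReal.ofReal b + ENNReal.ofReal c) := by
  have h1 : ENNReal.ofReal a ^ p ≤ ENNReal.ofReal b ^ p + ENNReal.ofReal c ^ p := by
    rw [ENNReal.ofReal_rpow_of_nonneg ha hp.le, ENNReal.ofReal_rpow_of_nonneg hb hp.le,
      ENNReal.ofReal_rpow_of_nonneg hc hp.le, ← ENNReal.ofReal_add (by positivity) (by positivity)]
    exact ENNReal.ofReal_le_ofReal h
  have key : ∀ x : ℝ≥0∞, (x ^ p) ^ (1 / p) = x := fun x => by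
    rw [← ENNReal.rpow_mul, mul_one_div_cancel hp.ne', ENNReal.rpow_one]
  have h2 := ENNReal.rpow_le_rpow h1 (by positivity : 0 ≤ 1 / p)
  have h3 := ENNReal.rpow_add_le_mul_rpow_add_rpow (ENNReal.ofReal b ^ p) (ENNReal.ofReal c ^ p)
    (p := 1 / p) (by rw [le_div_iff₀ hp]; linarith)
  rw [key] at h2
  rw [key, key] at h3
  exact h2.trans h3

theorem tsum_quasi_add {q : ℝ} (hq : 0 < q) (f g : ℕ → ℝ≥0∞) :
    (∑' n, (f n + g n) ^ q) ^ (1 / q) ≤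
      (2 : ℝ≥0∞) ^ (max (1 / q - 1) 0) *
        ((∑' n, f n ^ q) ^ (1 / q) + (∑' n, g n ^ q) ^ (1 / q)) := by
  rcases le_total 1 q with h | h
  · have h0 : max (1 / q - 1) 0 = 0 := by
      apply max_eq_right
      have : 1 / q ≤ 1 := by rw [div_le_iff₀ hq]; linarith
      linarith
    rw [h0, ENNReal.rpow_zero, one_mul]
    have := ENNReal.lintegral_Lp_add_le (μ := MeasureTheory.Measure.count) (f := f) (g := g)
      (measurable_of_countable f).aemeasurable (measurable_of_countable g).aemeasurable h
    simpa only [MeasureTheory.lintegral_count, Pi.add_apply] using this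
  · have h1 : 1 ≤ 1 / q := by rw [le_div_iff₀ hq]; linarith
    rw [max_eq_left (by linarith)]
    refine le_trans ?_ (ENNReal.rpow_add_le_mul_rpow_add_rpow _ _ h1)
    refine ENNReal.rpow_le_rpow ?_ (by positivity)
    rw [← ENNReal.tsum_add]
    exact ENNReal.tsum_le_tsum fun n => ENNReal.rpow_add_le_add_rpow _ _ hq.le h

theorem tsum_even_odd_le {q : ℝ} (hq : 0 < q) (C : ℝ≥0∞) (s u : ℕ → ℝ≥0∞)
    (h0 : ∀ n, s (2 * n) ≤ C * u n) (h1 : ∀ n, s (2 * n + 1) ≤ C * u n) :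
    (∑' n, s n ^ q) ^ (1 / q) ≤ (2 : ℝ≥0∞) ^ (1 / q) * C * (∑' n, u n ^ q) ^ (1 / q) := by
  have e : ∑' n, s n ^ q ≤ 2 * (C ^ q * ∑' n, u n ^ q) := by
    rw [← tsum_even_add_odd (f := fun n => s n ^ q) ENNReal.summable ENNReal.summable, two_mul,
      ← ENNReal.tsum_mul_left]
    refine add_le_add (ENNReal.tsum_le_tsum fun n => ?_) (ENNReal.tsum_le_tsum fun n => ?_)
    · rw [← ENNReal.mul_rpow_of_nonneg _ _ hq.le]
      exact ENNReal.rpow_le_rpow (h0 n) hq.le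
    · rw [← ENNReal.mul_rpow_of_nonneg _ _ hq.le]
      exact ENNReal.rpow_le_rpow (h1 n) hq.le
  have hq' : 0 ≤ 1 / q := by positivity
  refine (ENNReal.rpow_le_rpow e hq').trans ?_
  rw [ENNReal.mul_rpow_of_nonneg _ _ hq', ENNReal.mul_rpow_of_nonneg _ _ hq', ← ENNReal.rpow_mul,
    mul_one_div_cancel hq.ne', ENNReal.rpow_one, mul_assoc]

theorem singNum_add_le
    {p : ℝ} (hp : 0 < p) (hp1 : p ≤ 1)
    {B₁ B₂ : Type*} [AddCommGroup B₁] [Module ℂ B₁] [AddCommGroup B₂] [Module ℂ B₂]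
    (N₁ : B₁ → ℝ) (N₂ : B₂ → ℝ) (hN₂0 : ∀ g, 0 ≤ N₂ g)
    (hN₂add : ∀ g₁ g₂ : B₂, N₂ (g₁ + g₂) ^ p ≤ N₂ g₁ ^ p + N₂ g₂ ^ p)
    (T₁ T₂ : B₁ →ₗ[ℂ] B₂) (n k : ℕ) (hk : 2 * n ≤ k) :
    singNum N₁ N₂ (k + 1) (T₁ + T₂) ≤
      (2 : ℝ≥0∞) ^ (1 / p - 1) * (singNum N₁ N₂ (n + 1) T₁ + singNum N₁ N₂ (n + 1) T₂) := by
  have hC : (2 : ℝ≥0∞) ^ (1 / p - 1) ≠ ⊤ :=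
    ENNReal.rpow_ne_top_of_nonneg
      (by have : 1 ≤ 1 / p := by { rw [le_div_iff₀ hp]; linarith }
          linarith) (by simp)
  unfold singNum
  haveI : ∀ n : ℕ, Nonempty {T₀ : B₁ →ₗ[ℂ] B₂ // LinearMap.rank T₀ ≤ ((n + 1 - 1 : ℕ) : Cardinal)} :=
    fun n => ⟨⟨0, by simp⟩⟩
  rw [ENNReal.iInf_add, ENNReal.mul_iInf_of_ne (by simp) hC]
  refine le_iInf fun S₁ => ?_
  rw [ENNReal.add_iInf, ENNReal.mul_iInf_of_ne (by simp) hC]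
  refine le_iInf fun S₂ => ?_
  have hr : LinearMap.rank (S₁.1 + S₂.1) ≤ ((k + 1 - 1 : ℕ) : Cardinal) := by
    refine (LinearMap.rank_add_le _ _).trans ((add_le_add S₁.2 S₂.2).trans ?_)
    rw [← Nat.cast_add]
    exact Nat.cast_le.2 (by omega)
  refine (iInf_le _ ⟨S₁.1 + S₂.1, hr⟩).trans ?_
  unfold opQNorm
  refine iSup_le fun f => ?_
  have e : (T₁ + T₂ - (S₁.1 + S₂.1)) f.1 = (T₁ - S₁.1) f.1 + (T₂ - S₂.1) f.1 := by
    simp only [LinearMap.sub_apply, LinearMap.add_apply]; abel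
  show ENNReal.ofReal (N₂ ((T₁ + T₂ - (S₁.1 + S₂.1)) f.1)) ≤ _
  rw [e]
  refine (ofReal_quasi_add hp hp1 (hN₂0 _) (hN₂0 _) (hN₂0 _) (hN₂add _ _)).trans ?_
  gcongr
  · exact le_iSup (fun f : {f : B₁ // N₁ f ≤ 1} => ENNReal.ofReal (N₂ ((T₁ - S₁.1) f.1))) f
  · exact le_iSup (fun f : {f : B₁ // N₁ f ≤ 1} => ENNReal.ofReal (N₂ ((T₂ - S₂.1) f.1))) f

/-- quasi-triangle inequality for the Schatten–von Neumann quasinorm: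
`‖T₁+T₂‖_{I_q} ≤ 2^{(1/p-1) + max(1/q-1,0) + 1/q} (‖T₁‖_{I_q} + ‖T₂‖_{I_q})`. -/
theorem schattenQNorm_add_le
    {p q : ℝ} (hp : 0 < p) (hp1 : p ≤ 1) (hq : 0 < q)
    {B₁ B₂ : Type*} [AddCommGroup B₁] [Module ℂ B₁] [AddCommGroup B₂] [Module ℂ B₂]
    (N₁ : B₁ → ℝ) (hN₁ : ∀ f, 0 ≤ N₁ f)
    (N₂ : B₂ → ℝ) (hN₂0 : ∀ g, 0 ≤ N₂ g)
    (hN₂smul : ∀ (α : ℂ) (g : B₂), N₂ (α • g) = ‖α‖ * N₂ g)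
    (hN₂add : ∀ g₁ g₂ : B₂, N₂ (g₁ + g₂) ^ p ≤ N₂ g₁ ^ p + N₂ g₂ ^ p)
    (T₁ T₂ : B₁ →ₗ[ℂ] B₂)
    (hT₁ : opQNorm N₁ N₂ T₁ ≠ ⊤) (hT₂ : opQNorm N₁ N₂ T₂ ≠ ⊤) :
    schattenQNorm N₁ N₂ q (T₁ + T₂) ≤
      ENNReal.ofReal ((2 : ℝ) ^ ((1 / p - 1) + max (1 / q - 1) 0 + 1 / q)) *
        (schattenQNorm N₁ N₂ q T₁ + schattenQNorm N₁ N₂ q T₂) := by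
  refine (tsum_even_odd_le hq ((2 : ℝ≥0∞) ^ (1 / p - 1))
    (fun j => singNum N₁ N₂ (j + 1) (T₁ + T₂))
    (fun j => singNum N₁ N₂ (j + 1) T₁ + singNum N₁ N₂ (j + 1) T₂)
    (fun n => singNum_add_le hp hp1 N₁ N₂ hN₂0 hN₂add T₁ T₂ n _ le_rfl)
    (fun n => singNum_add_le hp hp1 N₁ N₂ hN₂0 hN₂add T₁ T₂ n _ (Nat.le_succ _))).trans ?_
  refine (mul_le_mul_right (tsum_quasi_add hq _ _) _).trans (le_of_eq ?_)
  rw [← mul_assoc, ← ENNReal.ofReal_rpow_of_pos two_pos, ENNReal.ofReal_ofNat,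
    ENNReal.rpow_add _ _ (by simp) (by simp), ENNReal.rpow_add _ _ (by simp) (by simp)]
  unfold schattenQNorm
  ring

end
end

section
/- Let p ∈ (0,1], let J₁, J₂ be index sets, let ω₁ : J₁ → (0,∞), ω₂ : J₂ → (0,∞), ω : J₂ × J₁ → (0,∞), and let C₀ > 0 be such that ω₂(j₂)/ω₁(j₁) ≤ C₀·ω(j₂,j₁) for all (j₂,j₁). Let a : J₂ × J₁ → ℂ satisfy M := (∑_{(j₂,j₁)} (|a(j₂,j₁)|·ω(j₂,j₁))^p)^{1/p} < ∞, and let (T_a f)(j₂) = ∑_{j₁} a(j₂,j₁)·f(j₁). Then there exist sequences g_n : J₁ → ℂ and e_n : J₂ → ℂ (n ∈ ℕ) such that: (i) ∑_{n} (‖g_n‖_{ℓ¹_{1/ω₁}(J₁)}·‖e_n‖_{ℓ^p_{ω₂}(J₂)})^p ≤ C₀^p·M^p; and (ii) for every f : J₁ → ℂ with ‖f‖_{ℓ^∞_{ω₁}(J₁)} < ∞ one has ‖T_a f − ∑_{n<N} (∑_{j₁} f(j₁)·g_n(j₁))·e_n‖_{ℓ^p_{ω₂}(J₂)} ≤ ε_N·‖f‖_{ℓ^∞_{ω₁}(J₁)}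 for a sequence ε_N → 0 independent of f. In particular T_a is p-nuclear from ℓ^∞_{ω₁}(J₁) to ℓ^p_{ω₂}(J₂), with p-nuclear quasinorm at most C₀·M. -/
open scoped ENNReal

noncomputable section

/-- Weighted `ℓ^∞` quasinorm `‖f‖ = sup_j |f j| · w j`, valued in `[0,∞]`. -/
def lInfW {J : Type*} (w : J → ℝ) (f : J → ℂ) : ℝ≥0∞ :=
  ⨆ j, ENNReal.ofReal (‖f j‖ * w j)

/-- Weighted `ℓ^s` quasinorm `‖f‖ = (∑_j (|f j| · w j)^s)^(1/s)`, valued in `[0,∞]`. -/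
def lpW {J : Type*} (s : ℝ) (w : J → ℝ) (f : J → ℂ) : ℝ≥0∞ :=
  (∑' j, ENNReal.ofReal (‖f j‖ * w j) ^ s) ^ (1 / s)

/-- Weighted `ℓ¹` norm `‖f‖ = ∑_j |f j| · w j`, valued in `[0,∞]`. -/
def l1W {J : Type*} (w : J → ℝ) (f : J → ℂ) : ℝ≥0∞ :=
  ∑' j, ENNReal.ofReal (‖f j‖ * w j)

lemma tsum_rpow_le_aux {ι : Type*} {p : ℝ} (hp : 0 < p) (hp1 : p ≤ 1) (x : ι → ℝ≥0∞) :
    (∑' i, x i) ^ p ≤ ∑' i, x i ^ p := by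
  have hfin : ∀ F : Finset ι, (∑ i ∈ F, x i) ^ p ≤ ∑ i ∈ F, x i ^ p := by
    classical
    intro F
    induction F using Finset.induction_on with
    | empty => simp [ENNReal.zero_rpow_of_pos hp]
    | insert i F hi ih =>
      rw [Finset.sum_insert hi, Finset.sum_insert hi]
      exact (ENNReal.rpow_add_le_add_rpow _ _ hp.le hp1).trans (by gcongr)
  rw [← ENNReal.le_rpow_inv_iff hp]
  rw [ENNReal.tsum_eq_iSup_sum]
  refine iSup_le fun F => ?_
  rw [ENNReal.le_rpow_inv_iff hp]
  exact (hfin F).trans (ENNReal.sum_le_tsum F)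

lemma lpW_rpow {J : Type*} {p : ℝ} (hp : 0 < p) (w : J → ℝ) (f : J → ℂ) :
    lpW p w f ^ p = ∑' j, ENNReal.ofReal (‖f j‖ * w j) ^ p := by
  rw [lpW, ← ENNReal.rpow_mul, one_div_mul_cancel hp.ne', ENNReal.rpow_one]

lemma row_le {p : ℝ} (hp : 0 < p) (hp1 : p ≤ 1)
    {J₁ J₂ : Type*} (ω₁ : J₁ → ℝ) (ω₂ : J₂ → ℝ) (ω : J₂ × J₁ → ℝ)
    (hω₁ : ∀ j, 0 < ω₁ j) (hω₂ : ∀ j, 0 < ω₂ j)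
    (C₀ : ℝ) (hC₀ : 0 < C₀)
    (hdom : ∀ (j₂ : J₂) (j₁ : J₁), ω₂ j₂ / ω₁ j₁ ≤ C₀ * ω (j₂, j₁))
    (b : J₂ × J₁ → ℂ) (f : J₁ → ℂ) (j₂ : J₂) :
    (∑' j₁, ENNReal.ofReal (‖b (j₂, j₁) * f j₁‖ * ω₂ j₂)) ^ p ≤
      (ENNReal.ofReal C₀ * lInfW ω₁ f) ^ p *
        ∑' j₁, ENNReal.ofReal (‖b (j₂, j₁)‖ * ω (j₂, j₁)) ^ p := by
  refine (tsum_rpow_le_aux hp hp1 _).trans ?_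
  rw [← ENNReal.tsum_mul_left]
  refine ENNReal.tsum_le_tsum fun j₁ => ?_
  rw [← ENNReal.mul_rpow_of_nonneg _ _ hp.le]
  gcongr
  have h1 : ENNReal.ofReal (‖f j₁‖ * ω₁ j₁) ≤ lInfW ω₁ f :=
    le_iSup (fun j => ENNReal.ofReal (‖f j‖ * ω₁ j)) j₁
  have h2 : ω₂ j₂ ≤ C₀ * ω (j₂, j₁) * ω₁ j₁ := (div_le_iff₀ (hω₁ j₁)).1 (hdom j₂ j₁)
  calc ENNReal.ofReal (‖b (j₂, j₁) * f j₁‖ * ω₂ j₂)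
      ≤ ENNReal.ofReal ((C₀ * (‖f j₁‖ * ω₁ j₁)) * (‖b (j₂, j₁)‖ * ω (j₂, j₁))) := by
        apply ENNReal.ofReal_le_ofReal
        rw [norm_mul]
        have := mul_le_mul_of_nonneg_left h2 (mul_nonneg (norm_nonneg (b (j₂, j₁))) (norm_nonneg (f j₁)))
        linarith
    _ = ENNReal.ofReal C₀ * ENNReal.ofReal (‖f j₁‖ * ω₁ j₁) *
          ENNReal.ofReal (‖b (j₂, j₁)‖ * ω (j₂, j₁)) := by
        rw [ENNReal.ofReal_mul (by have := hω₁ j₁; positivity), ENNReal.ofReal_mul hC₀.le]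
    _ ≤ _ := by gcongr

lemma row_summable {p : ℝ} (hp : 0 < p) (hp1 : p ≤ 1)
    {J₁ J₂ : Type*} (ω₁ : J₁ → ℝ) (ω₂ : J₂ → ℝ) (ω : J₂ × J₁ → ℝ)
    (hω₁ : ∀ j, 0 < ω₁ j) (hω₂ : ∀ j, 0 < ω₂ j)
    (C₀ : ℝ) (hC₀ : 0 < C₀)
    (hdom : ∀ (j₂ : J₂) (j₁ : J₁), ω₂ j₂ / ω₁ j₁ ≤ C₀ * ω (j₂, j₁))
    (b : J₂ × J₁ → ℂ) (hb : ∑' s, ENNReal.ofReal (‖b s‖ * ω s) ^ p ≠ ⊤)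
    (f : J₁ → ℂ) (hf : lInfW ω₁ f ≠ ⊤) (j₂ : J₂) :
    Summable fun j₁ => ‖b (j₂, j₁) * f j₁‖ := by
  have h := row_le hp hp1 ω₁ ω₂ ω hω₁ hω₂ C₀ hC₀ hdom b f j₂
  have h1 : ∑' j₁, ENNReal.ofReal (‖b (j₂, j₁)‖ * ω (j₂, j₁)) ^ p ≠ ⊤ := by
    rw [ENNReal.tsum_prod'] at hb
    exact ENNReal.ne_top_of_tsum_ne_top hb j₂
  have h2 : (∑' j₁, ENNReal.ofReal (‖b (j₂, j₁) * f j₁‖ * ω₂ j₂)) ≠ ⊤ := by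
    intro ht
    rw [ht, ENNReal.top_rpow_of_pos hp, top_le_iff] at h
    exact ENNReal.mul_ne_top (ENNReal.rpow_ne_top_of_nonneg hp.le
      (ENNReal.mul_ne_top ENNReal.ofReal_ne_top hf)) h1 h
  have h3 := ENNReal.summable_toReal h2
  have h4 : Summable fun j₁ => ‖b (j₂, j₁) * f j₁‖ * ω₂ j₂ := by
    refine h3.congr fun j₁ => ?_
    rw [ENNReal.toReal_ofReal (mul_nonneg (norm_nonneg _) (hω₂ j₂).le)]
  exact (summable_mul_right_iff (hω₂ j₂).ne').1 h4

lemma op_le {p : ℝ} (hp : 0 < p) (hp1 : p ≤ 1)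
    {J₁ J₂ : Type*} (ω₁ : J₁ → ℝ) (ω₂ : J₂ → ℝ) (ω : J₂ × J₁ → ℝ)
    (hω₁ : ∀ j, 0 < ω₁ j) (hω₂ : ∀ j, 0 < ω₂ j)
    (C₀ : ℝ) (hC₀ : 0 < C₀)
    (hdom : ∀ (j₂ : J₂) (j₁ : J₁), ω₂ j₂ / ω₁ j₁ ≤ C₀ * ω (j₂, j₁))
    (b : J₂ × J₁ → ℂ) (hb : ∑' s, ENNReal.ofReal (‖b s‖ * ω s) ^ p ≠ ⊤)
    (f : J₁ → ℂ) (hf : lInfW ω₁ f ≠ ⊤) :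
    lpW p ω₂ (fun j₂ => ∑' j₁, b (j₂, j₁) * f j₁) ≤
      (ENNReal.ofReal C₀ * lpW p ω b) * lInfW ω₁ f := by
  rw [← ENNReal.rpow_le_rpow_iff hp, lpW_rpow hp]
  have : ((ENNReal.ofReal C₀ * lpW p ω b) * lInfW ω₁ f) ^ p =
      ∑' j₂, (ENNReal.ofReal C₀ * lInfW ω₁ f) ^ p *
        ∑' j₁, ENNReal.ofReal (‖b (j₂, j₁)‖ * ω (j₂, j₁)) ^ p := by
    rw [ENNReal.tsum_mul_left, mul_right_comm, ENNReal.mul_rpow_of_nonneg _ _ hp.le,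
      lpW_rpow hp, ENNReal.tsum_prod']
  rw [this]
  refine ENNReal.tsum_le_tsum fun j₂ => ?_
  refine le_trans ?_ (row_le hp hp1 ω₁ ω₂ ω hω₁ hω₂ C₀ hC₀ hdom b f j₂)
  gcongr
  have hs := row_summable hp hp1 ω₁ ω₂ ω hω₁ hω₂ C₀ hC₀ hdom b hb f hf j₂
  rw [← ENNReal.ofReal_tsum_of_nonneg
    (fun j₁ => mul_nonneg (norm_nonneg _) (hω₂ j₂).le) (hs.mul_right _), tsum_mul_right]
  apply ENNReal.ofReal_le_ofReal
  exact mul_le_mul_of_nonneg_right (norm_tsum_le_tsum_norm hs) (hω₂ j₂).le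

lemma tail_tendsto {J : Type*} (x : J → ℝ≥0∞) (hx : ∑' s, x s ≠ ⊤) (code : J → ℕ) :
    Filter.Tendsto (fun N => ∑' s, if code s < N then 0 else x s) Filter.atTop (nhds 0) := by
  classical
  have h := ENNReal.tendsto_tsum_compl_atTop_zero hx
  rw [ENNReal.tendsto_nhds_zero] at h ⊢
  intro δ hδ
  obtain ⟨F, hF⟩ := (h δ hδ).exists
  filter_upwards [Filter.eventually_gt_atTop (F.sup code)] with N hN
  refine le_trans ?_ hF
  have hsub : ∑' (b : { x // x ∉ F }), x ↑b = ∑' s, Set.indicator {s | s ∉ F} x s :=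
    tsum_subtype {s | s ∉ F} x
  rw [hsub]
  refine ENNReal.tsum_le_tsum fun s => ?_
  by_cases hs : s ∈ F
  · have : code s < N := lt_of_le_of_lt (Finset.le_sup hs) hN
    simp [this]
  · have : s ∈ {s | s ∉ F} := hs
    rw [Set.indicator_of_mem this]
    split_ifs <;> simp

lemma rank_one {p : ℝ} (hp : 0 < p)
    {J₁ J₂ : Type*} (ω₁ : J₁ → ℝ) (ω₂ : J₂ → ℝ) (ω : J₂ × J₁ → ℝ)
    (hω₁ : ∀ j, 0 < ω₁ j)
    (C₀ : ℝ) (hC₀ : 0 < C₀)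
    (hdom : ∀ (j₂ : J₂) (j₁ : J₁), ω₂ j₂ / ω₁ j₁ ≤ C₀ * ω (j₂, j₁))
    (a : J₂ × J₁ → ℂ) (code : J₂ × J₁ → ℕ) (hcode : Set.InjOn code {s | a s ≠ 0}) (n : ℕ) :
    ∃ (g : J₁ → ℂ) (e : J₂ → ℂ),
      (∀ j₂ j₁, g j₁ * e j₂ = if n = code (j₂, j₁) then a (j₂, j₁) else 0) ∧
      (Function.support g).Finite ∧
      (l1W (fun j => (ω₁ j)⁻¹) g * lpW p ω₂ e) ^ p ≤
        ∑' s, if n = code s then ENNReal.ofReal C₀ ^ p * ENNReal.ofReal (‖a s‖ * ω s) ^ p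
          else 0 := by
  classical
  by_cases h : ∃ s, a s ≠ 0 ∧ code s = n
  · obtain ⟨⟨k₂, k₁⟩, hs, rfl⟩ := h
    refine ⟨Pi.single k₁ (a (k₂, k₁)), Pi.single k₂ 1, ?_, ?_, ?_⟩
    · intro j₂ j₁
      by_cases hj : (j₂, j₁) = (k₂, k₁)
      · simp only [Prod.mk.injEq] at hj
        obtain ⟨rfl, rfl⟩ := hj
        simp
      · have h1 : (Pi.single k₁ (a (k₂, k₁)) : J₁ → ℂ) j₁ * (Pi.single k₂ 1 : J₂ → ℂ) j₂ = 0 := by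
          simp only [Pi.single_apply]
          simp only [Prod.mk.injEq] at hj
          grind
        rw [h1]
        split_ifs with hc
        · by_contra hne
          exact hj (hcode (Ne.symm hne) hs hc.symm)
        · rfl
    · exact (Set.finite_singleton k₁).subset Pi.support_single_subset
    · refine le_trans ?_ (ENNReal.le_tsum (k₂, k₁))
      rw [if_pos rfl, ← ENNReal.mul_rpow_of_nonneg _ _ hp.le]
      refine ENNReal.rpow_le_rpow ?_ hp.le
      have e1 : l1W (fun j => (ω₁ j)⁻¹) (Pi.single k₁ (a (k₂, k₁)))
          = ENNReal.ofReal (‖a (k₂, k₁)‖ * (ω₁ k₁)⁻¹) := by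
        rw [l1W, tsum_eq_single k₁]
        · simp
        · intro j hj
          simp [hj]
      have e2 : lpW p ω₂ (Pi.single k₂ 1) = ENNReal.ofReal (ω₂ k₂) := by
        rw [lpW, tsum_eq_single k₂]
        · rw [← ENNReal.rpow_mul, mul_one_div_cancel hp.ne', ENNReal.rpow_one]
          simp
        · intro j hj
          simp [hj, hp]
      have := hω₁ k₁
      rw [e1, e2, ← ENNReal.ofReal_mul (by positivity), ← ENNReal.ofReal_mul hC₀.le]
      apply ENNReal.ofReal_le_ofReal
      have := mul_le_mul_of_nonneg_left (hdom k₂ k₁) (norm_nonneg (a (k₂, k₁)))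
      rw [div_eq_mul_inv] at this
      linarith
  · push Not at h
    refine ⟨0, 0, ?_, by simp, ?_⟩
    · intro j₂ j₁
      have := h (j₂, j₁)
      simp only [Pi.zero_apply, mul_zero]
      grind
    · simp [l1W, hp]

/-- a matrix `a` in the weighted class `U^p(ω)` induces a `p`-nuclear matrix
operator `T_a` from `ℓ^∞_{ω₁}(J₁)` to `ℓ^p_{ω₂}(J₂)`: there is a rank-one expansion
`T_a = ∑_n ⟨·, g_n⟩ e_n` with `∑_n (‖g_n‖_{ℓ¹_{1/ω₁}}·‖e_n‖_{ℓ^p_{ω₂}})^p ≤ C₀^p·M^p`,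
converging uniformly on bounded sets; hence the `p`-nuclear quasinorm is at most `C₀·M`. -/
theorem matrix_operator_nuclear
    {p : ℝ} (hp : 0 < p) (hp1 : p ≤ 1)
    {J₁ J₂ : Type*} (ω₁ : J₁ → ℝ) (ω₂ : J₂ → ℝ) (ω : J₂ × J₁ → ℝ)
    (hω₁ : ∀ j, 0 < ω₁ j) (hω₂ : ∀ j, 0 < ω₂ j) (hω : ∀ jk, 0 < ω jk)
    (C₀ : ℝ) (hC₀ : 0 < C₀)
    (hdom : ∀ (j₂ : J₂) (j₁ : J₁), ω₂ j₂ / ω₁ j₁ ≤ C₀ * ω (j₂, j₁))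
    (a : J₂ × J₁ → ℂ) (hM : lpW p ω a ≠ ⊤) :
    ∃ (g : ℕ → J₁ → ℂ) (e : ℕ → J₂ → ℂ),
      (∑' n : ℕ, (l1W (fun j => (ω₁ j)⁻¹) (g n) * lpW p ω₂ (e n)) ^ p ≤
        (ENNReal.ofReal C₀ * lpW p ω a) ^ p) ∧
      ∃ ε : ℕ → ℝ≥0∞, Filter.Tendsto ε Filter.atTop (nhds 0) ∧
        ∀ f : J₁ → ℂ, lInfW ω₁ f ≠ ⊤ →
          (∀ j₂ : J₂, Summable fun j₁ => ‖a (j₂, j₁) * f j₁‖) ∧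
          (∀ n : ℕ, Summable fun j₁ => ‖f j₁ * g n j₁‖) ∧
          ∀ N : ℕ,
            lpW p ω₂ (fun j₂ => (∑' j₁, a (j₂, j₁) * f j₁) -
                ∑ n ∈ Finset.range N, (∑' j₁, f j₁ * g n j₁) * e n j₂) ≤
              ε N * lInfW ω₁ f := by
  classical
  have hM' : ∑' s, ENNReal.ofReal (‖a s‖ * ω s) ^ p ≠ ⊤ := by
    rw [← lpW_rpow hp]
    exact ENNReal.rpow_ne_top_of_nonneg hp.le hM
  have hcount : {s | a s ≠ 0}.Countable := by
    refine (Summable.countable_support_ennreal hM').mono fun s hs => ?_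
    have h1 : 0 < ‖a s‖ * ω s := mul_pos (norm_pos_iff.2 hs) (hω s)
    have h2 : 0 < ENNReal.ofReal (‖a s‖ * ω s) := ENNReal.ofReal_pos.2 h1
    exact (ENNReal.rpow_pos h2 ENNReal.ofReal_ne_top).ne'
  obtain ⟨code, hcode⟩ := Set.countable_iff_exists_injOn.1 hcount
  choose g e hge hfin hbd using
    rank_one hp ω₁ ω₂ ω hω₁ C₀ hC₀ hdom a code hcode
  refine ⟨g, e, ?_, ?_⟩
  · refine (ENNReal.tsum_le_tsum hbd).trans ?_
    rw [ENNReal.tsum_comm, ENNReal.mul_rpow_of_nonneg _ _ hp.le, lpW_rpow hp,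
      ← ENNReal.tsum_mul_left]
    refine ENNReal.tsum_le_tsum fun s => ?_
    rw [tsum_ite_eq]
  · let b : ℕ → J₂ × J₁ → ℂ := fun N s => if code s < N then 0 else a s
    have hbp : ∀ N s, ENNReal.ofReal (‖b N s‖ * ω s) ^ p =
        if code s < N then 0 else ENNReal.ofReal (‖a s‖ * ω s) ^ p := by
      intro N s
      simp only [b]
      split_ifs
      · simp [hp]
      · rfl
    have hb : ∀ N, ∑' s, ENNReal.ofReal (‖b N s‖ * ω s) ^ p ≠ ⊤ := by
      intro N
      refine ne_top_of_le_ne_top hM' (ENNReal.tsum_le_tsum fun s => ?_)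
      rw [hbp]
      split_ifs <;> simp
    refine ⟨fun N => ENNReal.ofReal C₀ * lpW p ω (b N), ?_, ?_⟩
    · have h1 := tail_tendsto _ hM' code
      have h2 : Filter.Tendsto (fun N => lpW p ω (b N)) Filter.atTop (nhds 0) := by
        have h3 := h1.ennrpow_const (1 / p)
        rw [ENNReal.zero_rpow_of_pos (by positivity)] at h3
        refine h3.congr fun N => ?_
        simp only [lpW, hbp]
      simpa using ENNReal.Tendsto.const_mul h2 (Or.inr (ENNReal.ofReal_ne_top (r := C₀)))
    · intro f hf
      have hs2 : ∀ n, Summable fun j₁ => f j₁ * g n j₁ := fun n =>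
        summable_of_hasFiniteSupport ((hfin n).subset fun j hj => right_ne_zero_of_mul hj)
      have hsa := row_summable hp hp1 ω₁ ω₂ ω hω₁ hω₂ C₀ hC₀ hdom a hM' f hf
      refine ⟨hsa, fun n => (hs2 n).norm, fun N => ?_⟩
      refine le_trans (le_of_eq ?_)
        (op_le hp hp1 ω₁ ω₂ ω hω₁ hω₂ C₀ hC₀ hdom (b N) (hb N) f hf)
      congr 1
      funext j₂
      have h1 : ∀ n ∈ Finset.range N, Summable fun j₁ => f j₁ * g n j₁ * e n j₂ :=
        fun n _ => (hs2 n).mul_right _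
      simp_rw [← tsum_mul_right]
      rw [← Summable.tsum_finsetSum h1, ← Summable.tsum_sub (hsa j₂).of_norm (summable_sum h1)]
      congr 1
      funext j₁
      simp_rw [mul_assoc, hge]
      rw [← Finset.mul_sum, Finset.sum_ite_eq']
      simp only [b, Finset.mem_range]
      split_ifs <;> ring

end
end

section
/- Let p ∈ (0,1], let J₁, J₂ be index sets, let ω₁ : J₁ → (0,∞), ω₂ : J₂ → (0,∞), ω : J₂ × J₁ → (0,∞), and let C₀ > 0 be such that ω₂(j₂)/ω₁(j₁) ≤ C₀·ω(j₂,j₁) for all (j₂,j₁). Let a : J₂ × J₁ → ℂ satisfy M := (∑_{(j₂,j₁)} (|a(j₂,j₁)|·ω(j₂,j₁))^p)^{1/p} < ∞. Then for every f : J₁ → ℂ with ‖f‖_{ℓ^∞_{ω₁}(J₁)} < ∞, the sums (T_a f)(j₂) = ∑_{j₁} a(j₂,j₁)·f(j₁) converge absolutely for every j₂ ∈ J₂, and ‖T_a f‖_{ℓ^p_{ω₂}(J₂)} ≤ C₀·M·‖f‖_{ℓ^∞_{ω₁}(J₁)}. In particular, the matrix operator T_a is bounded from ℓ^∞_{ω₁}(J₁)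 to ℓ^p_{ω₂}(J₂) with operator quasinorm at most C₀·M. -/
open scoped ENNReal

noncomputable section

theorem ennreal_tsum_rpow_le {ι : Type*} (x : ι → ℝ≥0∞) {p : ℝ} (hp : 0 < p) (hp1 : p ≤ 1) :
    (∑' i, x i) ^ p ≤ ∑' i, x i ^ p := by
  have hfin : ∀ s : Finset ι, (∑ i ∈ s, x i) ^ p ≤ ∑ i ∈ s, x i ^ p := by
    classical
    intro s
    induction s using Finset.induction_on with
    | empty => simp [hp]
    | insert i s hi ih =>
      rw [Finset.sum_insert hi, Finset.sum_insert hi]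
      exact (ENNReal.rpow_add_le_add_rpow _ _ hp.le hp1).trans (by gcongr)
  have h1 : ∑' i, x i ≤ (∑' i, x i ^ p) ^ p⁻¹ := by
    rw [ENNReal.tsum_eq_iSup_sum]
    refine iSup_le fun s => ?_
    rw [ENNReal.le_rpow_inv_iff hp]
    exact (hfin s).trans (ENNReal.sum_le_tsum s)
  exact (ENNReal.le_rpow_inv_iff hp).1 h1

/-- a matrix `a` in the weighted class `U^p(ω)` induces a bounded matrix
operator `T_a` from `ℓ^∞_{ω₁}(J₁)` to `ℓ^p_{ω₂}(J₂)`, with absolutely convergent defining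
sums and operator quasinorm at most `C₀ · ‖a‖_{U^p(ω)}`. -/
theorem matrix_operator_bounded
    {p : ℝ} (hp : 0 < p) (hp1 : p ≤ 1)
    {J₁ J₂ : Type*} (ω₁ : J₁ → ℝ) (ω₂ : J₂ → ℝ) (ω : J₂ × J₁ → ℝ)
    (hω₁ : ∀ j, 0 < ω₁ j) (hω₂ : ∀ j, 0 < ω₂ j) (hω : ∀ jk, 0 < ω jk)
    (C₀ : ℝ) (hC₀ : 0 < C₀)
    (hdom : ∀ (j₂ : J₂) (j₁ : J₁), ω₂ j₂ / ω₁ j₁ ≤ C₀ * ω (j₂, j₁))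
    (a : J₂ × J₁ → ℂ) (hM : lpW p ω a ≠ ⊤)
    (f : J₁ → ℂ) (hf : lInfW ω₁ f ≠ ⊤) :
    (∀ j₂ : J₂, Summable fun j₁ => ‖a (j₂, j₁) * f j₁‖) ∧
      lpW p ω₂ (fun j₂ => ∑' j₁, a (j₂, j₁) * f j₁) ≤
        ENNReal.ofReal C₀ * lpW p ω a * lInfW ω₁ f := by
  set K : ℝ≥0∞ := ENNReal.ofReal C₀ * lInfW ω₁ f with hK
  have hKtop : K ≠ ⊤ := ENNReal.mul_ne_top ENNReal.ofReal_ne_top hf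
  set b : J₂ → J₁ → ℝ≥0∞ := fun j₂ j₁ => ENNReal.ofReal (‖a (j₂, j₁)‖ * ω (j₂, j₁)) with hb
  have hprod : ∑' jk, ENNReal.ofReal (‖a jk‖ * ω jk) ^ p = ∑' j₂, ∑' j₁, b j₂ j₁ ^ p :=
    ENNReal.tsum_prod' (f := fun jk => ENNReal.ofReal (‖a jk‖ * ω jk) ^ p)
  have hS : ∑' j₂, ∑' j₁, b j₂ j₁ ^ p ≠ ⊤ := by
    intro h
    apply hM
    rw [lpW, hprod, h, ENNReal.top_rpow_of_pos (by positivity)]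
  have hpt : ∀ j₂ j₁, ENNReal.ofReal ‖a (j₂, j₁) * f j₁‖ * ENNReal.ofReal (ω₂ j₂)
      ≤ K * b j₂ j₁ := by
    intro j₂ j₁
    have h1 : ENNReal.ofReal (‖f j₁‖ * ω₁ j₁) ≤ lInfW ω₁ f :=
      le_iSup (fun j => ENNReal.ofReal (‖f j‖ * ω₁ j)) j₁
    have h2 : ω₂ j₂ ≤ C₀ * ω (j₂, j₁) * ω₁ j₁ := (div_le_iff₀ (hω₁ j₁)).1 (hdom j₂ j₁)
    have h3 : ‖a (j₂, j₁) * f j₁‖ * ω₂ j₂ ≤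
        C₀ * (‖f j₁‖ * ω₁ j₁) * (‖a (j₂, j₁)‖ * ω (j₂, j₁)) := by
      rw [norm_mul]
      calc _ ≤ ‖a (j₂, j₁)‖ * ‖f j₁‖ * (C₀ * ω (j₂, j₁) * ω₁ j₁) := by gcongr
        _ = _ := by ring
    have h4 : 0 ≤ ‖f j₁‖ * ω₁ j₁ := mul_nonneg (norm_nonneg _) (hω₁ j₁).le
    calc _ = ENNReal.ofReal (‖a (j₂, j₁) * f j₁‖ * ω₂ j₂) :=
          (ENNReal.ofReal_mul (norm_nonneg _)).symm
      _ ≤ ENNReal.ofReal (C₀ * (‖f j₁‖ * ω₁ j₁) * (‖a (j₂, j₁)‖ * ω (j₂, j₁))) :=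
          ENNReal.ofReal_le_ofReal h3
      _ = ENNReal.ofReal C₀ * ENNReal.ofReal (‖f j₁‖ * ω₁ j₁) * b j₂ j₁ := by
          rw [ENNReal.ofReal_mul (mul_nonneg hC₀.le h4), ENNReal.ofReal_mul hC₀.le]
      _ ≤ K * b j₂ j₁ := by rw [hK]; gcongr
  have hrow : ∀ j₂, (∑' j₁, ENNReal.ofReal ‖a (j₂, j₁) * f j₁‖) * ENNReal.ofReal (ω₂ j₂)
      ≤ K * ∑' j₁, b j₂ j₁ := by
    intro j₂
    rw [← ENNReal.tsum_mul_right, ← ENNReal.tsum_mul_left]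
    exact ENNReal.tsum_le_tsum (hpt j₂)
  have hbp : ∀ j₂, (∑' j₁, b j₂ j₁) ^ p ≤ ∑' j₁, b j₂ j₁ ^ p := fun j₂ =>
    ennreal_tsum_rpow_le _ hp hp1
  have hbtop : ∀ j₂, ∑' j₁, b j₂ j₁ ≠ ⊤ := by
    intro j₂ h
    have h1 := (hbp j₂).trans (ENNReal.le_tsum (f := fun j₂ => ∑' j₁, b j₂ j₁ ^ p) j₂)
    rw [h, ENNReal.top_rpow_of_pos hp] at h1
    exact hS (top_le_iff.1 h1)
  have hsum : ∀ j₂ : J₂, Summable fun j₁ => ‖a (j₂, j₁) * f j₁‖ := by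
    intro j₂
    have h1 : ∑' j₁, ENNReal.ofReal ‖a (j₂, j₁) * f j₁‖ ≠ ⊤ := by
      intro h
      have h2 := hrow j₂
      rw [h, ENNReal.top_mul (by simpa using hω₂ j₂)] at h2
      exact ENNReal.mul_ne_top hKtop (hbtop j₂) (top_le_iff.1 h2)
    have h3 := ENNReal.summable_toReal h1
    simpa only [ENNReal.toReal_ofReal (norm_nonneg _)] using h3
  refine ⟨hsum, ?_⟩
  have hT : ∀ j₂, ENNReal.ofReal (‖∑' j₁, a (j₂, j₁) * f j₁‖ * ω₂ j₂) ^ p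
      ≤ K ^ p * ∑' j₁, b j₂ j₁ ^ p := by
    intro j₂
    calc _ ≤ (K * ∑' j₁, b j₂ j₁) ^ p := by
          refine ENNReal.rpow_le_rpow (le_trans ?_ (hrow j₂)) hp.le
          rw [ENNReal.ofReal_mul (norm_nonneg _),
            ← ENNReal.ofReal_tsum_of_nonneg (fun _ => norm_nonneg _) (hsum j₂)]
          gcongr
          exact norm_tsum_le_tsum_norm (hsum j₂)
      _ = K ^ p * (∑' j₁, b j₂ j₁) ^ p := ENNReal.mul_rpow_of_nonneg _ _ hp.le
      _ ≤ _ := by gcongr; exact hbp j₂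
  have hp' : 0 ≤ 1 / p := by positivity
  calc lpW p ω₂ (fun j₂ => ∑' j₁, a (j₂, j₁) * f j₁)
      ≤ (K ^ p * ∑' j₂, ∑' j₁, b j₂ j₁ ^ p) ^ (1 / p) := by
        rw [lpW, ← ENNReal.tsum_mul_left]
        exact ENNReal.rpow_le_rpow (ENNReal.tsum_le_tsum hT) hp'
    _ = K * lpW p ω a := by
        rw [lpW, hprod, ENNReal.mul_rpow_of_nonneg _ _ hp', ← ENNReal.rpow_mul,
          mul_one_div_cancel hp.ne', ENNReal.rpow_one]
    _ = _ := by rw [hK]; ring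

end
end
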